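/- Let D ⊆ ℝ^N (N ≥ 2) be compact, m > 0 with C_m(D) nonempty, and let a_ij : D → ℝ be continuous functions forming a symmetric, uniformly positive definite matrix field on D. For Ω ∈ C_m(D) and k ≥ 1, define λ_k(Ω) = inf over all k-dimensional linear subspaces V of C_c^∞(Ω) of sup over nonzero u ∈ V of ( ∫_Ω Σ_{i,j} a_ij(x) ∂u/∂x_i ∂u/∂x_j dx ) / ( ∫_Ω u² dx ). Then for every k ≥ 1, λ_k : C_m(D) → ℝ is bounded and continuous with respect to uniform convergence: if Ω_n → Ω uniformly in C_m(D), then λ_k(Ω_n) → λ_k(Ω). -/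

import Mathlib

open MeasureTheory Metric Filter Topology

noncomputable section

/-- Uniform (Hausdorff) convergence of a sequence of sets. -/
def UnifConvTo {N : ℕ} (Ω : ℕ → Set (EuclideanSpace ℝ (Fin N)))
    (L : Set (EuclideanSpace ℝ (Fin N))) : Prop :=
  ∀ ε > (0 : ℝ), ∀ᶠ n in Filter.atTop,
    Ω n ⊆ Metric.thickening ε L ∧ L ⊆ Metric.thickening ε (Ω n)

/-- `Ω` belongs to the class `C_m(D)`: open convex subset of `D` of volume `m`. -/
def InCm {N : ℕ} (D : Set (EuclideanSpace ℝ (Fin N))) (m : ℝ)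
    (Ω : Set (EuclideanSpace ℝ (Fin N))) : Prop :=
  Ω ⊆ D ∧ IsOpen Ω ∧ Convex ℝ Ω ∧ volume Ω = ENNReal.ofReal m

/-- The Rayleigh quotient on `Ω` of the operator `-∂_i(a_ij(x) ∂_j ·)`. -/
def rayleighQuot {N : ℕ} (a : EuclideanSpace ℝ (Fin N) → Matrix (Fin N) (Fin N) ℝ)
    (Ω : Set (EuclideanSpace ℝ (Fin N))) (u : EuclideanSpace ℝ (Fin N) → ℝ) : ℝ :=
  (∫ x in Ω, ∑ i, ∑ j, a x i j *
      fderiv ℝ u x (EuclideanSpace.single i (1 : ℝ)) *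
      fderiv ℝ u x (EuclideanSpace.single j (1 : ℝ))) /
  (∫ x in Ω, u x ^ 2)

/-- The `k`-th Dirichlet eigenvalue of `-∂_i(a_ij(x) ∂_j ·)` on `Ω`, via Courant–Fischer
min-max over `k`-dimensional subspaces of test functions. -/
def lamk {N : ℕ} (a : EuclideanSpace ℝ (Fin N) → Matrix (Fin N) (Fin N) ℝ)
    (Ω : Set (EuclideanSpace ℝ (Fin N))) (k : ℕ) : ℝ :=
  sInf {μ : ℝ | ∃ V : Submodule ℝ (EuclideanSpace ℝ (Fin N) → ℝ),
    Module.finrank ℝ V = k ∧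
    (∀ u ∈ V, ContDiff ℝ (⊤ : ℕ∞) u ∧ HasCompactSupport u ∧ tsupport u ⊆ Ω) ∧
    μ = sSup {q : ℝ | ∃ u ∈ V, u ≠ 0 ∧ q = rayleighQuot a Ω u}}

lemma ball_subset_of_thickening {N : ℕ} {Ω : Set (EuclideanSpace ℝ (Fin N))}
    (ho : IsOpen Ω) (hc : Convex ℝ Ω) {x0 : EuclideanSpace ℝ (Fin N)} {r : ℝ} (hr : 0 < r)
    (h : ball x0 (2 * r) ⊆ thickening r Ω) : ball x0 r ⊆ Ω := by
  intro z hz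
  by_contra hzΩ
  obtain ⟨f, hf⟩ := geometric_hahn_banach_open_point hc ho hzΩ
  set w := (InnerProductSpace.toDual ℝ (EuclideanSpace ℝ (Fin N))).symm f with hw
  have hfw : ∀ y, f y = inner ℝ w y := fun y => by
    rw [hw, InnerProductSpace.toDual_symm_apply]
  have hw0 : 0 < ‖w‖ := by
    rw [norm_pos_iff]
    intro h0
    have hz2 : z ∈ thickening r Ω := h (ball_subset_ball (by linarith) hz)
    obtain ⟨b, hb, _⟩ := mem_thickening_iff.1 hz2
    have := hf b hb
    simp [hfw, h0] at this
  set v := (r / ‖w‖) • w with hv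
  have hvn : ‖v‖ = r := by
    rw [hv, norm_smul, Real.norm_eq_abs, abs_of_pos (by positivity)]
    field_simp
  have hmem : z + v ∈ ball x0 (2 * r) := by
    rw [mem_ball, dist_eq_norm] at hz ⊢
    have : z + v - x0 = (z - x0) + v := by abel
    rw [this]
    calc _ ≤ ‖z - x0‖ + ‖v‖ := norm_add_le _ _
      _ < 2 * r := by linarith
  obtain ⟨b, hb, hbd⟩ := mem_thickening_iff.1 (h hmem)
  have h1 := hf b hb
  have h2 : f (z + v) - f b ≤ ‖w‖ * ‖z + v - b‖ := by
    rw [← map_sub, hfw]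
    exact real_inner_le_norm _ _
  rw [dist_eq_norm] at hbd
  have h3 : f v = r * ‖w‖ := by
    rw [hfw, hv, inner_smul_right, real_inner_self_eq_norm_sq]
    field_simp
  rw [map_add, h3] at h2
  have : ‖w‖ * ‖z + v - b‖ < ‖w‖ * r := by gcongr
  linarith

lemma dilate_mem {N : ℕ} {A B : Set (EuclideanSpace ℝ (Fin N))} (hB : Convex ℝ B)
    {x0 : EuclideanSpace ℝ (Fin N)} {r ε : ℝ} (hr : 0 < r) (hε : 0 < ε)
    (hball : ball x0 r ⊆ B) (hA : A ⊆ thickening ε B) {x : EuclideanSpace ℝ (Fin N)}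
    (hx : x0 + (1 + ε / r) • (x - x0) ∈ A) : x ∈ B := by
  obtain ⟨b, hb, hbd⟩ := mem_thickening_iff.1 (hA hx)
  set δ := ε / r with hδ
  have hδ0 : 0 < δ := by positivity
  set y := x0 + (1 + δ) • (x - x0) with hy
  have hp : x0 + δ⁻¹ • (y - b) ∈ B := by
    apply hball
    rw [mem_ball, dist_eq_norm] at *
    rw [add_sub_cancel_left, norm_smul, Real.norm_eq_abs, abs_of_pos (by positivity)]
    calc δ⁻¹ * ‖y - b‖ < δ⁻¹ * ε := by gcongr
      _ = r := by rw [hδ]; field_simp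
  have := hB hb hp (a := (1 + δ)⁻¹) (b := δ * (1 + δ)⁻¹) (by positivity) (by positivity)
    (by field_simp)
  convert this using 1
  have h1 : (1 + δ) • x = y + δ • x0 := by rw [hy]; module
  have h2 : x = (1 + δ)⁻¹ • ((1 + δ) • x) := by rw [smul_smul, inv_mul_cancel₀ (by positivity), one_smul]
  have h3 : (δ * (1 + δ)⁻¹) • (δ⁻¹ • (y - b)) = (1 + δ)⁻¹ • (y - b) := by
    rw [smul_smul]; congr 1; field_simp
  clear_value y
  rw [h2, h1, smul_add (δ * (1 + δ)⁻¹) x0, h3]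
  module

/-- Uniform-ball compactness: every sequence in `C_m(D)` has infinitely many terms containing
a common ball. -/
lemma exists_common_ball {N : ℕ}
    (D : Set (EuclideanSpace ℝ (Fin N))) (hD : IsCompact D)
    (m : ℝ) (hm : 0 < m) (Ω : ℕ → Set (EuclideanSpace ℝ (Fin N))) (hΩ : ∀ n, InCm D m (Ω n)) :
    ∃ x0, ∃ r > 0, ball x0 r ⊆ D ∧ ∃ᶠ n in atTop, ball x0 r ⊆ Ω n := by
  have hne : ∀ n, (Ω n).Nonempty := by
    intro n
    by_contra h
    rw [Set.not_nonempty_iff_eq_empty] at h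
    have := (hΩ n).2.2.2
    rw [h, measure_empty] at this
    have h2 := ENNReal.ofReal_pos.2 hm
    rw [← this] at h2
    exact lt_irrefl _ h2
  let K : ℕ → TopologicalSpace.NonemptyCompacts (EuclideanSpace ℝ (Fin N)) := fun n =>
    ⟨⟨closure (Ω n), hD.closure_of_subset (hΩ n).1⟩, (hne n).closure⟩
  have hKc : ∀ n, (K n : Set (EuclideanSpace ℝ (Fin N))) = closure (Ω n) := fun n => rfl
  have hcomp := TopologicalSpace.NonemptyCompacts.isCompact_subsets_of_isCompact hD
  obtain ⟨K0, hK0, φ, hφ, hlim⟩ := hcomp.tendsto_subseq (x := K) (fun n => by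
    change (K n : Set (EuclideanSpace ℝ (Fin N))) ⊆ D
    rw [hKc]
    exact closure_minimal (hΩ n).1 hD.isClosed)
  set S : Set (EuclideanSpace ℝ (Fin N)) := (K0 : Set (EuclideanSpace ℝ (Fin N))) with hS
  have hSD : S ⊆ D := hK0
  have hScl : IsClosed S := K0.isCompact.isClosed
  have hclose : ∀ ε > 0, ∀ᶠ n in atTop, Ω (φ n) ⊆ thickening ε S ∧ S ⊆ thickening ε (Ω (φ n)) := by
    intro ε hε
    filter_upwards [Metric.tendsto_nhds.1 hlim ε hε] with n hn
    have hfin : hausdorffEDist (closure (Ω (φ n))) S ≠ ⊤ :=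
      hausdorffEDist_ne_top_of_nonempty_of_bounded (hne _).closure K0.nonempty
        (K (φ n)).isCompact.isBounded K0.isCompact.isBounded
    have hd : hausdorffDist (closure (Ω (φ n))) S < ε := hn
    constructor
    · intro x hx
      obtain ⟨y, hy, hxy⟩ := exists_dist_lt_of_hausdorffDist_lt (subset_closure hx) hd hfin
      exact mem_thickening_iff.2 ⟨y, hy, hxy⟩
    · intro x hx
      rw [← thickening_closure]
      rw [hausdorffDist_comm] at hd
      rw [hausdorffEDist_comm] at hfin
      obtain ⟨y, hy, hxy⟩ := exists_dist_lt_of_hausdorffDist_lt hx hd hfin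
      exact mem_thickening_iff.2 ⟨y, hy, hxy⟩
  have hSconv : Convex ℝ S := by
    intro x hx y hy a b ha hb hab
    rw [← hScl.closure_eq, Metric.mem_closure_iff]
    intro ε hε
    obtain ⟨n, h1, h2⟩ := (hclose (ε / 2) (half_pos hε)).exists
    obtain ⟨x', hx', hxx⟩ := mem_thickening_iff.1 (h2 hx)
    obtain ⟨y', hy', hyy⟩ := mem_thickening_iff.1 (h2 hy)
    obtain ⟨z, hz, hzz⟩ := mem_thickening_iff.1 (h1 ((hΩ _).2.2.1 hx' hy' ha hb hab))
    refine ⟨z, hz, ?_⟩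
    have : dist (a • x + b • y) (a • x' + b • y') ≤ ε / 2 := by
      rw [dist_eq_norm] at *
      have e : a • x + b • y - (a • x' + b • y') = a • (x - x') + b • (y - y') := by module
      rw [e]
      calc _ ≤ ‖a • (x - x')‖ + ‖b • (y - y')‖ := norm_add_le _ _
        _ = a * ‖x - x'‖ + b * ‖y - y'‖ := by
          rw [norm_smul, norm_smul, Real.norm_of_nonneg ha, Real.norm_of_nonneg hb]
        _ ≤ a * (ε / 2) + b * (ε / 2) := by gcongr
        _ = ε / 2 := by rw [← add_mul, hab, one_mul]
    have := dist_triangle (a • x + b • y) (a • x' + b • y') z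
    linarith
  have hvol : ENNReal.ofReal m ≤ volume S := by
    have ht := tendsto_measure_cthickening_of_isCompact (μ := volume) K0.isCompact
    have ht2 : Tendsto (fun r => volume (cthickening r S)) (𝓝[>] 0) (𝓝 (volume S)) :=
      ht.mono_left nhdsWithin_le_nhds
    refine ge_of_tendsto ht2 ?_
    filter_upwards [self_mem_nhdsWithin] with ε hε
    obtain ⟨n, h1, h2⟩ := (hclose ε hε).exists
    rw [← (hΩ (φ n)).2.2.2]
    exact measure_mono (h1.trans (thickening_subset_cthickening _ _))
  have hint : (interior S).Nonempty := by
    by_contra h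
    rw [Set.not_nonempty_iff_eq_empty] at h
    have h0 := hSconv.addHaar_frontier volume
    rw [frontier, h, hScl.closure_eq, Set.sdiff_empty] at h0
    rw [h0] at hvol
    exact absurd (ENNReal.ofReal_pos.2 hm) (not_lt.2 hvol)
  obtain ⟨x0, hx0⟩ := hint
  obtain ⟨ρ, hρ, hball⟩ := Metric.isOpen_iff.1 isOpen_interior x0 hx0
  have hball' : ball x0 ρ ⊆ S := hball.trans interior_subset
  refine ⟨x0, ρ / 2, half_pos hρ, ((ball_subset_ball (by linarith)).trans hball').trans hSD, ?_⟩
  have hev : ∀ᶠ n in atTop, ball x0 (ρ / 2) ⊆ Ω (φ n) := by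
    filter_upwards [hclose (ρ / 2) (half_pos hρ)] with n hn
    refine ball_subset_of_thickening (hΩ _).2.1 (hΩ _).2.2.1 (half_pos hρ) ?_
    rw [mul_div_cancel₀ _ (two_ne_zero)]
    exact hball'.trans hn.2
  exact hφ.tendsto_atTop.frequently hev.frequently

/-- Test functions on `Ω`. -/
def TestFn {N : ℕ} (Ω : Set (EuclideanSpace ℝ (Fin N))) (u : EuclideanSpace ℝ (Fin N) → ℝ) : Prop :=
  ContDiff ℝ (⊤ : ℕ∞) u ∧ HasCompactSupport u ∧ tsupport u ⊆ Ω

/-- Partial derivative. -/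
def pd {N : ℕ} (u : EuclideanSpace ℝ (Fin N) → ℝ) (i : Fin N) (x : EuclideanSpace ℝ (Fin N)) : ℝ :=
  fderiv ℝ u x (EuclideanSpace.single i (1 : ℝ))

/-- Quadratic form. -/
def qf {N : ℕ} (A : Matrix (Fin N) (Fin N) ℝ) (ξ : Fin N → ℝ) : ℝ :=
  ∑ i, ∑ j, A i j * ξ i * ξ j

lemma qf_zero {N : ℕ} (A : Matrix (Fin N) (Fin N) ℝ) : qf A (fun _ => 0) = 0 := by simp [qf]

lemma qf_le {N : ℕ} (A : Matrix (Fin N) (Fin N) ℝ) (ξ : Fin N → ℝ) {η : ℝ}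
    (h : ∀ i j, |A i j| ≤ η) : qf A ξ ≤ η * N * ∑ i, ξ i ^ 2 := by
  have h1 : qf A ξ ≤ ∑ i, ∑ j, η * (ξ i ^ 2 / 2 + ξ j ^ 2 / 2) := by
    refine Finset.sum_le_sum fun i _ => Finset.sum_le_sum fun j _ => ?_
    calc A i j * ξ i * ξ j ≤ |A i j * ξ i * ξ j| := le_abs_self _
      _ = |A i j| * (|ξ i| * |ξ j|) := by rw [abs_mul, abs_mul, mul_assoc]
      _ ≤ η * (ξ i ^ 2 / 2 + ξ j ^ 2 / 2) := by
        have h0 : 0 ≤ η := (abs_nonneg _).trans (h i j)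
        gcongr
        · exact h i j
        · nlinarith [sq_nonneg (|ξ i| - |ξ j|), sq_abs (ξ i), sq_abs (ξ j)]
  refine h1.trans (le_of_eq ?_)
  simp only [← Finset.mul_sum, Finset.sum_add_distrib, Finset.sum_const, Finset.card_univ,
    Fintype.card_fin, nsmul_eq_mul, ← Finset.sum_div]
  ring

lemma qf_sub {N : ℕ} (A B : Matrix (Fin N) (Fin N) ℝ) (ξ : Fin N → ℝ) :
    qf (A - B) ξ = qf A ξ - qf B ξ := by
  simp [qf, sub_mul, Finset.sum_sub_distrib]

lemma qf_smul {N : ℕ} (A : Matrix (Fin N) (Fin N) ℝ) (ξ : Fin N → ℝ) (t : ℝ) :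
    qf A (fun i => t * ξ i) = t ^ 2 * qf A ξ := by
  simp only [qf, Finset.mul_sum]
  refine Finset.sum_congr rfl fun i _ => Finset.sum_congr rfl fun j _ => ?_
  ring

lemma pd_cont {N : ℕ} {u : EuclideanSpace ℝ (Fin N) → ℝ} (hu : ContDiff ℝ (⊤ : ℕ∞) u) (i : Fin N) :
    Continuous (pd u i) :=
  (hu.continuous_fderiv (by simp)).clm_apply continuous_const

lemma pd_supp {N : ℕ} {u : EuclideanSpace ℝ (Fin N) → ℝ} {x} (hx : x ∉ tsupport u) (i : Fin N) :
    pd u i x = 0 := by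
  have : fderiv ℝ u x = 0 := by
    by_contra h
    exact hx (support_fderiv_subset ℝ h)
  simp [pd, this]

lemma pd_compact {N : ℕ} {u : EuclideanSpace ℝ (Fin N) → ℝ} (hu : HasCompactSupport u) (i : Fin N) :
    HasCompactSupport (pd u i) :=
  HasCompactSupport.intro hu (fun _ hx => pd_supp hx i)

lemma rq_eq {N : ℕ} (a : EuclideanSpace ℝ (Fin N) → Matrix (Fin N) (Fin N) ℝ)
    {Ω : Set (EuclideanSpace ℝ (Fin N))} {u : EuclideanSpace ℝ (Fin N) → ℝ} (hu : TestFn Ω u) :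
    rayleighQuot a Ω u = (∫ x, qf (a x) (fun i => pd u i x)) / (∫ x, u x ^ 2) := by
  unfold rayleighQuot
  congr 1
  · refine setIntegral_eq_integral_of_forall_compl_eq_zero (f := fun x => qf (a x) (fun i => pd u i x)) ?_
    intro x hx
    have : x ∉ tsupport u := fun h => hx (hu.2.2 h)
    simp [pd_supp this, qf]
  · refine setIntegral_eq_integral_of_forall_compl_eq_zero ?_
    intro x hx
    have : x ∉ tsupport u := fun h => hx (hu.2.2 h)
    simp [image_eq_zero_of_notMem_tsupport this]

lemma qf_integrable {N : ℕ} {a : EuclideanSpace ℝ (Fin N) → Matrix (Fin N) (Fin N) ℝ}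
    {D : Set (EuclideanSpace ℝ (Fin N))} (ha_cont : ∀ i j, ContinuousOn (fun x => a x i j) D)
    {Ω : Set (EuclideanSpace ℝ (Fin N))} (hΩ : Ω ⊆ D)
    {u : EuclideanSpace ℝ (Fin N) → ℝ} (hu : TestFn Ω u) :
    Integrable (fun x => qf (a x) (fun i => pd u i x)) := by
  have hs : Function.support (fun x => qf (a x) (fun i => pd u i x)) ⊆ tsupport u := by
    intro x hx
    by_contra h
    exact hx (by simp [pd_supp h, qf])
  rw [← integrableOn_iff_integrable_of_support_subset hs]
  refine ContinuousOn.integrableOn_compact hu.2.1 ?_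
  unfold qf
  refine continuousOn_finsetSum _ fun i _ => continuousOn_finsetSum _ fun j _ => ?_
  exact (((ha_cont i j).mono (hu.2.2.trans hΩ)).mul (pd_cont hu.1 i).continuousOn).mul
    (pd_cont hu.1 j).continuousOn

lemma sq_integrable {N : ℕ} {f : EuclideanSpace ℝ (Fin N) → ℝ} (h : Continuous f)
    (hc : HasCompactSupport f) : Integrable (fun x => f x ^ 2) := by
  refine (h.pow 2).integrable_of_hasCompactSupport ?_
  exact HasCompactSupport.intro hc (fun x hx => by simp [image_eq_zero_of_notMem_tsupport hx])

lemma int_sq_pos {N : ℕ} {f : EuclideanSpace ℝ (Fin N) → ℝ} (h : Continuous f)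
    (hc : HasCompactSupport f) (hf : f ≠ 0) : 0 < ∫ x, f x ^ 2 := by
  obtain ⟨x, hx⟩ := Function.ne_iff.1 hf
  refine (h.pow 2).integral_pos_of_hasCompactSupport_nonneg_nonzero ?_ (fun x => sq_nonneg _) (x := x) (pow_ne_zero _ hx)
  exact HasCompactSupport.intro hc (fun x hx => by simp [image_eq_zero_of_notMem_tsupport hx])

lemma poincare {N : ℕ} {R : ℝ} {u : EuclideanSpace ℝ (Fin N) → ℝ}
    (hu : TestFn (closedBall 0 R) u) (i : Fin N) :
    ∫ x, u x ^ 2 ≤ 4 * R ^ 2 * ∫ x, pd u i x ^ 2 := by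
  have hc := hu.1.continuous
  have hd := pd_cont hu.1 i
  have hxi : Continuous (fun x : EuclideanSpace ℝ (Fin N) => x i) := by fun_prop
  have hdu : Differentiable ℝ u := hu.1.differentiable (by simp)
  have hfx : ∀ x : EuclideanSpace ℝ (Fin N), HasFDerivAt (fun x : EuclideanSpace ℝ (Fin N) => x i)
    (EuclideanSpace.proj i : EuclideanSpace ℝ (Fin N) →L[ℝ] ℝ) x :=
    fun x => (EuclideanSpace.proj i : EuclideanSpace ℝ (Fin N) →L[ℝ] ℝ).hasFDerivAt
  have hgx : ∀ x, HasFDerivAt (fun x => u x ^ 2) ((2 * u x) • fderiv ℝ u x) x := fun x => by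
    simpa using (hdu x).hasFDerivAt.pow 2
  have h1 : ∀ x : EuclideanSpace ℝ (Fin N), fderiv ℝ (fun x : EuclideanSpace ℝ (Fin N) => x i) x
      (EuclideanSpace.single i (1:ℝ)) = 1 := fun x => by
    rw [(hfx x).fderiv]; simp
  have h2 : ∀ x, fderiv ℝ (fun x => u x ^ 2) x (EuclideanSpace.single i (1:ℝ)) = 2 * u x * pd u i x :=
    fun x => by rw [(hgx x).fderiv]; simp [pd]
  have hz : ∀ x, x ∉ tsupport u → u x = 0 := fun x hx => image_eq_zero_of_notMem_tsupport hx
  have hint : Integrable (fun x => x i * (2 * u x * pd u i x)) := by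
    refine Continuous.integrable_of_hasCompactSupport (by fun_prop) ?_
    exact HasCompactSupport.intro hu.2.1 (fun x hx => by simp [hz x hx])
  have key := integral_mul_fderiv_eq_neg_fderiv_mul_of_integrable (μ := volume)
    (f := fun x : EuclideanSpace ℝ (Fin N) => x i) (g := fun x => u x ^ 2)
    (v := EuclideanSpace.single i (1:ℝ))
    (by simp only [h1, one_mul]; exact sq_integrable hc hu.2.1)
    (by simp only [h2]; exact hint)
    (by
      refine Continuous.integrable_of_hasCompactSupport (by fun_prop) ?_
      exact HasCompactSupport.intro hu.2.1 (fun x hx => by simp [hz x hx]))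
    (fun x _ => (hfx x).differentiableAt) (fun x _ => (hgx x).differentiableAt)
  simp only [h1, h2, one_mul] at key
  have h3 : ∫ x, u x ^ 2 = ∫ x, -(x i * (2 * u x * pd u i x)) := by
    rw [integral_neg, key, neg_neg]
  have i1 := sq_integrable hc hu.2.1
  have i2 := sq_integrable hd (pd_compact hu.2.1 i)
  have h4 : ∫ x, u x ^ 2 ≤ ∫ x, (2⁻¹ * u x ^ 2 + 2 * R ^ 2 * pd u i x ^ 2) := by
    conv_lhs => rw [h3]
    refine integral_mono hint.neg ((i1.const_mul _).add (i2.const_mul _)) fun x => ?_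
    by_cases hx : x ∈ tsupport u
    · have hxR := hu.2.2 hx
      rw [mem_closedBall_zero_iff] at hxR
      have hxi' : |x i| ≤ R := (by simpa using PiLp.norm_apply_le x i : |x i| ≤ ‖x‖).trans hxR
      have hsq : x i ^ 2 ≤ R ^ 2 := sq_le_sq' (abs_le.1 hxi').1 (abs_le.1 hxi').2
      have : x i ^ 2 * pd u i x ^ 2 ≤ R ^ 2 * pd u i x ^ 2 := by gcongr
      simp only
      nlinarith [sq_nonneg (u x + 2 * (x i * pd u i x))]
    · simp [hz x hx]
      positivity
  rw [integral_add (i1.const_mul _) (i2.const_mul _), integral_const_mul, integral_const_mul] at h4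
  linarith

lemma fin_bound {V H H' : Type*} [AddCommGroup V] [Module ℝ V] [FiniteDimensional ℝ V]
    [NormedAddCommGroup H] [NormedSpace ℝ H] [NormedAddCommGroup H'] [NormedSpace ℝ H']
    (T : V →ₗ[ℝ] H) (hT : Function.Injective T) (P : V →ₗ[ℝ] H') :
    ∃ C : ℝ, 0 ≤ C ∧ ∀ v, ‖P v‖ ≤ C * ‖T v‖ := by
  let e := LinearEquiv.ofInjective T hT
  let S : LinearMap.range T →L[ℝ] H' := LinearMap.toContinuousLinearMap (P ∘ₗ e.symm.toLinearMap)
  refine ⟨‖S‖, S.opNorm_nonneg, fun v => ?_⟩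
  have := S.le_opNorm (e v)
  simpa [S, e] using this

lemma ccMemLp {N : ℕ} {f : EuclideanSpace ℝ (Fin N) → ℝ} (h : Continuous f)
    (hc : HasCompactSupport f) : MemLp f 2 volume := h.memLp_of_hasCompactSupport hc

lemma norm_toLp_sq {N : ℕ} {f : EuclideanSpace ℝ (Fin N) → ℝ} (h : MemLp f 2 volume) :
    ‖h.toLp f‖ ^ 2 = ∫ x, f x ^ 2 := by
  rw [← real_inner_self_eq_norm_sq, L2.inner_def]
  refine integral_congr_ae ?_
  filter_upwards [h.coeFn_toLp] with x hx
  rw [hx]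
  simp [sq]

lemma energy_bound {N : ℕ} {Ω : Set (EuclideanSpace ℝ (Fin N))}
    (V : Submodule ℝ (EuclideanSpace ℝ (Fin N) → ℝ)) [FiniteDimensional ℝ V]
    (hV : ∀ u ∈ V, TestFn Ω u) (i : Fin N) :
    ∃ C : ℝ, 0 ≤ C ∧ ∀ u ∈ V, ∫ x, pd u i x ^ 2 ≤ C * ∫ x, u x ^ 2 := by
  have m1 : ∀ u : V, MemLp (u : EuclideanSpace ℝ (Fin N) → ℝ) 2 volume := fun u =>
    ccMemLp (hV u u.2).1.continuous (hV u u.2).2.1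
  have m2 : ∀ u : V, MemLp (pd (u : EuclideanSpace ℝ (Fin N) → ℝ) i) 2 volume := fun u =>
    ccMemLp (pd_cont (hV u u.2).1 i) (pd_compact (hV u u.2).2.1 i)
  have hdiff : ∀ u : V, Differentiable ℝ (u : EuclideanSpace ℝ (Fin N) → ℝ) := fun u =>
    (hV u u.2).1.differentiable (by simp)
  let T : V →ₗ[ℝ] Lp ℝ 2 (volume : Measure (EuclideanSpace ℝ (Fin N))) :=
    { toFun := fun u => (m1 u).toLp _
      map_add' := fun u v => MemLp.toLp_add (m1 u) (m1 v)
      map_smul' := fun c u => MemLp.toLp_const_smul c (m1 u) }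
  have e1 : ∀ u v : V, pd ((u + v : V) : EuclideanSpace ℝ (Fin N) → ℝ) i = pd u i + pd v i := by
    intro u v
    funext x
    simp only [pd, Submodule.coe_add, Pi.add_apply]
    rw [fderiv_add (hdiff u x) (hdiff v x)]
    rfl
  have e2 : ∀ (c : ℝ) (u : V), pd ((c • u : V) : EuclideanSpace ℝ (Fin N) → ℝ) i = c • pd u i := by
    intro c u
    funext x
    simp only [pd, Submodule.coe_smul, Pi.smul_apply]
    rw [fderiv_const_smul (hdiff u x)]
    rfl
  let P : V →ₗ[ℝ] Lp ℝ 2 (volume : Measure (EuclideanSpace ℝ (Fin N))) :=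
    { toFun := fun u => (m2 u).toLp _
      map_add' := fun u v => by
        rw [← MemLp.toLp_add (m2 u) (m2 v)]
        exact MemLp.toLp_congr _ _ (by rw [e1])
      map_smul' := fun c u => by
        rw [RingHom.id_apply, ← MemLp.toLp_const_smul c (m2 u)]
        exact MemLp.toLp_congr _ _ (by rw [e2]) }
  have hT : Function.Injective T := by
    intro u v huv
    have := (MemLp.toLp_eq_toLp_iff (m1 u) (m1 v)).1 huv
    exact Subtype.ext ((Continuous.ae_eq_iff_eq volume (hV u u.2).1.continuous (hV v v.2).1.continuous).1 this)
  obtain ⟨C, hC, h⟩ := fin_bound T hT P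
  refine ⟨C ^ 2, by positivity, fun u hu => ?_⟩
  have := h ⟨u, hu⟩
  have h2 : ‖P ⟨u, hu⟩‖ ^ 2 ≤ (C * ‖T ⟨u, hu⟩‖) ^ 2 := by gcongr
  rw [mul_pow] at h2
  have a1 : ‖P ⟨u, hu⟩‖ ^ 2 = ∫ x, pd u i x ^ 2 := norm_toLp_sq (m2 ⟨u, hu⟩)
  have a2 : ‖T ⟨u, hu⟩‖ ^ 2 = ∫ x, u x ^ 2 := norm_toLp_sq (m1 ⟨u, hu⟩)
  rwa [a1, a2] at h2

lemma exists_testspace {N : ℕ} (hN : 1 ≤ N) {Ω : Set (EuclideanSpace ℝ (Fin N))} (ho : IsOpen Ω)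
    (hne : Ω.Nonempty) (k : ℕ) :
    ∃ V : Submodule ℝ (EuclideanSpace ℝ (Fin N) → ℝ), Module.finrank ℝ V = k ∧
      ∀ u ∈ V, TestFn Ω u := by
  obtain ⟨z, hz⟩ := hne
  haveI : Nonempty (Fin N) := ⟨⟨0, hN⟩⟩
  haveI : Nontrivial (EuclideanSpace ℝ (Fin N)) := inferInstance
  haveI : NeBot (𝓝[≠] z) := Module.punctured_nhds_neBot ℝ _ z
  have hinf : Ω.Infinite := infinite_of_mem_nhds z (ho.mem_nhds hz)
  let p : Fin k → EuclideanSpace ℝ (Fin N) := fun j => (hinf.natEmbedding Ω j : EuclideanSpace ℝ (Fin N))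
  have hpΩ : ∀ j, p j ∈ Ω := fun j => (hinf.natEmbedding Ω j).2
  have hpinj : Function.Injective p := by
    intro i j hij
    exact Fin.ext ((hinf.natEmbedding Ω).injective (Subtype.ext hij))
  have hex : ∀ j, ∃ f : EuclideanSpace ℝ (Fin N) → ℝ, TestFn Ω f ∧ ∀ i, f (p i) = if i = j then 1 else 0 := by
    intro j
    have hopen : IsOpen (Ω ∩ (p '' {i | i ≠ j})ᶜ) :=
      ho.inter ((Set.toFinite _).isClosed.isOpen_compl)
    have hmem : p j ∈ Ω ∩ (p '' {i | i ≠ j})ᶜ := by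
      refine ⟨hpΩ j, ?_⟩
      rintro ⟨i, hi, hij⟩
      exact hi (hpinj hij)
    obtain ⟨f, h1, h2, h3, -, h5⟩ := exists_contDiff_tsupport_subset (n := ⊤) (hopen.mem_nhds hmem)
    refine ⟨f, ⟨h3, h2, h1.trans Set.inter_subset_left⟩, fun i => ?_⟩
    split_ifs with h
    · rw [h, h5]
    · refine image_eq_zero_of_notMem_tsupport fun hh => (h1 hh).2 ⟨i, h, rfl⟩
  choose f hf hfp using hex
  have hlin : LinearIndependent ℝ f := by
    rw [Fintype.linearIndependent_iff]
    intro g hg i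
    have := congrFun hg (p i)
    simpa [hfp] using this
  refine ⟨Submodule.span ℝ (Set.range f), ?_, ?_⟩
  · rw [finrank_span_eq_card hlin, Fintype.card_fin]
  · intro u hu
    induction hu using Submodule.span_induction with
    | mem x h => obtain ⟨j, rfl⟩ := h; exact hf j
    | zero =>
      refine ⟨contDiff_const, HasCompactSupport.zero, ?_⟩
      have : tsupport (0 : EuclideanSpace ℝ (Fin N) → ℝ) = ∅ := tsupport_eq_empty_iff.2 rfl
      rw [this]; exact Set.empty_subset _
    | add x y _ _ hx hy =>
      exact ⟨hx.1.add hy.1, hx.2.1.add hy.2.1, (tsupport_add x y).trans (Set.union_subset hx.2.2 hy.2.2)⟩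
    | smul c x _ hx =>
      refine ⟨contDiff_const.smul hx.1, hx.2.1.smul_left (f := fun _ => c), ?_⟩
      exact (closure_mono (Function.support_const_smul_subset c x)).trans hx.2.2

/-- The value set in the min-max. -/
def rset {N : ℕ} (a : EuclideanSpace ℝ (Fin N) → Matrix (Fin N) (Fin N) ℝ)
    (Ω : Set (EuclideanSpace ℝ (Fin N))) (V : Submodule ℝ (EuclideanSpace ℝ (Fin N) → ℝ)) : Set ℝ :=
  {q : ℝ | ∃ u ∈ V, u ≠ 0 ∧ q = rayleighQuot a Ω u}

lemma bdd_rset {N : ℕ} {a : EuclideanSpace ℝ (Fin N) → Matrix (Fin N) (Fin N) ℝ}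
    {D : Set (EuclideanSpace ℝ (Fin N))} (hD : IsCompact D)
    (ha_cont : ∀ i j, ContinuousOn (fun x => a x i j) D)
    {Ω : Set (EuclideanSpace ℝ (Fin N))} (hΩ : Ω ⊆ D)
    (V : Submodule ℝ (EuclideanSpace ℝ (Fin N) → ℝ)) [FiniteDimensional ℝ V]
    (hV : ∀ u ∈ V, TestFn Ω u) : BddAbove (rset a Ω V) := by
  have hM : ∃ M : ℝ, 0 ≤ M ∧ ∀ x ∈ D, ∀ i j, |a x i j| ≤ M := by
    choose M hM using fun i j => hD.exists_bound_of_continuousOn (ha_cont i j)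
    refine ⟨∑ i, ∑ j, |M i j|, by positivity, fun x hx i j => ?_⟩
    calc |a x i j| ≤ M i j := hM i j x hx
      _ ≤ |M i j| := le_abs_self _
      _ ≤ ∑ j, |M i j| := Finset.single_le_sum (f := fun j => |M i j|) (fun _ _ => abs_nonneg _) (Finset.mem_univ j)
      _ ≤ ∑ i, ∑ j, |M i j| := Finset.single_le_sum (f := fun i => ∑ j, |M i j|) (fun _ _ => by positivity) (Finset.mem_univ i)
  obtain ⟨M, hM0, hM⟩ := hM
  choose C hC0 hC using energy_bound V hV
  refine ⟨M * N * ∑ i, C i, ?_⟩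
  rintro q ⟨u, hu, hu0, rfl⟩
  have ht := hV u hu
  rw [rq_eq a ht, div_le_iff₀ (int_sq_pos ht.1.continuous ht.2.1 hu0)]
  have hI : ∀ i, Integrable (fun x => pd u i x ^ 2) := fun i =>
    sq_integrable (pd_cont ht.1 i) (pd_compact ht.2.1 i)
  calc ∫ x, qf (a x) (fun i => pd u i x) ≤ ∫ x, M * N * ∑ i, pd u i x ^ 2 := by
        refine integral_mono (qf_integrable ha_cont hΩ ht)
          ((integrable_finsetSum _ fun i _ => hI i).const_mul _) fun x => ?_
        by_cases hx : x ∈ tsupport u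
        · exact qf_le _ _ (hM x (hΩ (ht.2.2 hx)))
        · simp [pd_supp hx, qf]
    _ = M * N * ∑ i, ∫ x, pd u i x ^ 2 := by
        rw [integral_const_mul, integral_finsetSum _ fun i _ => hI i]
    _ ≤ M * N * ∑ i, C i * ∫ x, u x ^ 2 := by
        gcongr with i
        exact hC i u hu
    _ = _ := by rw [← Finset.sum_mul]; ring

lemma qf_nonneg {N : ℕ} {a : EuclideanSpace ℝ (Fin N) → Matrix (Fin N) (Fin N) ℝ}
    {D : Set (EuclideanSpace ℝ (Fin N))} {ν : ℝ} (hν : 0 < ν)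
    (ha_pos : ∀ x ∈ D, ∀ ξ : Fin N → ℝ, ν * ∑ i, ξ i ^ 2 ≤ qf (a x) ξ)
    {x : EuclideanSpace ℝ (Fin N)} (hx : x ∈ D) (ξ : Fin N → ℝ) : 0 ≤ qf (a x) ξ :=
  le_trans (by positivity) (ha_pos x hx ξ)

lemma rq_nonneg {N : ℕ} {a : EuclideanSpace ℝ (Fin N) → Matrix (Fin N) (Fin N) ℝ}
    {D : Set (EuclideanSpace ℝ (Fin N))} {ν : ℝ} (hν : 0 < ν)
    (ha_pos : ∀ x ∈ D, ∀ ξ : Fin N → ℝ, ν * ∑ i, ξ i ^ 2 ≤ qf (a x) ξ)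
    {Ω : Set (EuclideanSpace ℝ (Fin N))} (hΩ : Ω ⊆ D)
    {u : EuclideanSpace ℝ (Fin N) → ℝ} (ht : TestFn Ω u) : 0 ≤ rayleighQuot a Ω u := by
  rw [rq_eq a ht]
  refine div_nonneg (integral_nonneg fun x => ?_) (integral_nonneg fun x => sq_nonneg _)
  by_cases hx : x ∈ tsupport u
  · exact qf_nonneg hν ha_pos (hΩ (ht.2.2 hx)) _
  · simp [pd_supp hx, qf]

lemma rq_lower {N : ℕ} (hN : 1 ≤ N) {a : EuclideanSpace ℝ (Fin N) → Matrix (Fin N) (Fin N) ℝ}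
    {D : Set (EuclideanSpace ℝ (Fin N))} (ha_cont : ∀ i j, ContinuousOn (fun x => a x i j) D)
    {ν : ℝ} (hν : 0 < ν)
    (ha_pos : ∀ x ∈ D, ∀ ξ : Fin N → ℝ, ν * ∑ i, ξ i ^ 2 ≤ qf (a x) ξ)
    {R : ℝ} (hR : 0 < R) (hDR : D ⊆ closedBall 0 R)
    {Ω : Set (EuclideanSpace ℝ (Fin N))} (hΩ : Ω ⊆ D)
    {u : EuclideanSpace ℝ (Fin N) → ℝ} (ht : TestFn Ω u) (hu0 : u ≠ 0) :
    ν / (4 * R ^ 2) ≤ rayleighQuot a Ω u := by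
  rw [rq_eq a ht, le_div_iff₀ (int_sq_pos ht.1.continuous ht.2.1 hu0)]
  let i0 : Fin N := ⟨0, hN⟩
  have hP := poincare (R := R) ⟨ht.1, ht.2.1, ht.2.2.trans (hΩ.trans hDR)⟩ i0
  have hI := sq_integrable (pd_cont ht.1 i0) (pd_compact ht.2.1 i0)
  calc ν / (4 * R ^ 2) * ∫ x, u x ^ 2 ≤ ν / (4 * R ^ 2) * (4 * R ^ 2 * ∫ x, pd u i0 x ^ 2) := by gcongr
    _ = ∫ x, ν * pd u i0 x ^ 2 := by rw [integral_const_mul]; field_simp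
    _ ≤ _ := by
      refine integral_mono (hI.const_mul _) (qf_integrable ha_cont hΩ ht) fun x => ?_
      by_cases hx : x ∈ tsupport u
      · refine le_trans ?_ (ha_pos x (hΩ (ht.2.2 hx)) _)
        gcongr
        exact Finset.single_le_sum (f := fun i => pd u i x ^ 2) (fun _ _ => sq_nonneg _) (Finset.mem_univ i0)
      · simp [pd_supp hx, qf]

lemma lamk_eq {N : ℕ} (a : EuclideanSpace ℝ (Fin N) → Matrix (Fin N) (Fin N) ℝ)
    (Ω : Set (EuclideanSpace ℝ (Fin N))) (k : ℕ) :
    lamk a Ω k = sInf {μ : ℝ | ∃ V : Submodule ℝ (EuclideanSpace ℝ (Fin N) → ℝ),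
      Module.finrank ℝ V = k ∧ (∀ u ∈ V, TestFn Ω u) ∧ μ = sSup (rset a Ω V)} := rfl

lemma integral_dilate {N : ℕ} (F : EuclideanSpace ℝ (Fin N) → ℝ) (x0 : EuclideanSpace ℝ (Fin N)) (t : ℝ) :
    ∫ x, F (x0 + t • (x - x0)) = |(t ^ N)⁻¹| * ∫ x, F x := by
  have h1 : ∀ x : EuclideanSpace ℝ (Fin N), x0 + t • (x - x0) = t • x + (x0 - t • x0) := fun x => by module
  simp only [h1]
  rw [Measure.integral_comp_smul volume (fun y => F (y + (x0 - t • x0))) t,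
    integral_add_right_eq_self, finrank_euclideanSpace_fin, smul_eq_mul]

/-- Dilation as a homeomorphism. -/
def dil {N : ℕ} (x0 : EuclideanSpace ℝ (Fin N)) (t : ℝ) (ht : t ≠ 0) :
    EuclideanSpace ℝ (Fin N) ≃ₜ EuclideanSpace ℝ (Fin N) where
  toFun x := x0 + t • (x - x0)
  invFun x := x0 + t⁻¹ • (x - x0)
  left_inv x := by simp [smul_smul, ht]
  right_inv x := by simp [smul_smul, ht]
  continuous_toFun := by fun_prop
  continuous_invFun := by fun_prop

lemma pd_dil {N : ℕ} (x0 : EuclideanSpace ℝ (Fin N)) (t : ℝ) (ht : t ≠ 0)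
    {u : EuclideanSpace ℝ (Fin N) → ℝ} (hu : Differentiable ℝ u) (i : Fin N) (x) :
    pd (u ∘ dil x0 t ht) i x = t * pd u i (x0 + t • (x - x0)) := by
  have h1 : HasFDerivAt (dil x0 t ht) (t • ContinuousLinearMap.id ℝ (EuclideanSpace ℝ (Fin N))) x :=
    (((hasFDerivAt_id x).sub_const x0).const_smul t).const_add x0
  have h2 := (hu (dil x0 t ht x)).hasFDerivAt.comp x h1
  unfold pd
  rw [h2.fderiv]
  simp
  left
  rfl

lemma rq_dil {N : ℕ} {a : EuclideanSpace ℝ (Fin N) → Matrix (Fin N) (Fin N) ℝ}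
    {D : Set (EuclideanSpace ℝ (Fin N))} (ha_cont : ∀ i j, ContinuousOn (fun x => a x i j) D)
    {ν : ℝ} (hν : 0 < ν)
    (ha_pos : ∀ x ∈ D, ∀ ξ : Fin N → ℝ, ν * ∑ i, ξ i ^ 2 ≤ qf (a x) ξ)
    {A B : Set (EuclideanSpace ℝ (Fin N))} (hA : A ⊆ D) (hB : B ⊆ D)
    (x0 : EuclideanSpace ℝ (Fin N)) (t : ℝ) (ht : t ≠ 0)
    (hAB : ∀ x, x0 + t • (x - x0) ∈ A → x ∈ B) {η : ℝ} (hη : 0 ≤ η)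
    (hclose : ∀ x ∈ B, x0 + t • (x - x0) ∈ A → ∀ i j, |a x i j - a (x0 + t • (x - x0)) i j| ≤ η)
    {u : EuclideanSpace ℝ (Fin N) → ℝ} (hu : TestFn A u) :
    TestFn B (u ∘ dil x0 t ht) ∧
    rayleighQuot a B (u ∘ dil x0 t ht) ≤ t ^ 2 * (1 + η * N / ν) * rayleighQuot a A u := by
  have hT : TestFn B (u ∘ dil x0 t ht) := by
    refine ⟨hu.1.comp ?_, hu.2.1.comp_homeomorph _, ?_⟩
    · change ContDiff ℝ _ (fun x => x0 + t • (x - x0))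
      fun_prop
    · rw [tsupport_comp_eq_preimage]
      intro x hx
      exact hAB x (hu.2.2 hx)
  refine ⟨hT, ?_⟩
  rw [rq_eq a hT, rq_eq a hu]
  have hden : ∫ x, (u ∘ dil x0 t ht) x ^ 2 = |(t ^ N)⁻¹| * ∫ x, u x ^ 2 :=
    integral_dilate (fun y => u y ^ 2) x0 t
  have hnum : ∫ x, qf (a x) (fun i => pd (u ∘ dil x0 t ht) i x) ≤
      t ^ 2 * (1 + η * N / ν) * (|(t ^ N)⁻¹| * ∫ x, qf (a x) (fun i => pd u i x)) := by
    rw [← integral_dilate (fun y => qf (a y) (fun i => pd u i y)) x0 t, ← integral_const_mul]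
    have hdu : Differentiable ℝ u := hu.1.differentiable (by simp)
    have hint : Integrable (fun x => qf (a (x0 + t • (x - x0))) (fun i => pd u i (x0 + t • (x - x0)))) := by
      have h1 : ∀ x : EuclideanSpace ℝ (Fin N), x0 + t • (x - x0) = t • x + (x0 - t • x0) := fun x => by module
      simp only [h1]
      exact ((qf_integrable ha_cont hA hu).comp_add_right (x0 - t • x0)).comp_smul ht
    refine integral_mono (qf_integrable ha_cont hB hT) (hint.const_mul _) fun x => ?_
    simp only [pd_dil x0 t ht hdu, qf_smul]
    rw [mul_assoc]
    refine mul_le_mul_of_nonneg_left ?_ (sq_nonneg t)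
    set y := x0 + t • (x - x0) with hy
    by_cases hyt : y ∈ tsupport u
    · have hyA := hu.2.2 hyt
      have hxB := hAB x hyA
      have h1 := qf_le (a x - a y) (fun i => pd u i y) (hclose x hxB hyA)
      rw [qf_sub] at h1
      have h2 := ha_pos y (hA hyA) (fun i => pd u i y)
      have h3 : η * N * ∑ i, pd u i y ^ 2 ≤ η * N / ν * qf (a y) (fun i => pd u i y) := by
        calc η * N * ∑ i, pd u i y ^ 2 = η * N / ν * (ν * ∑ i, pd u i y ^ 2) := by field_simp
          _ ≤ _ := by gcongr
      linarith
    · simp [pd_supp hyt, qf]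
  rw [hden]
  have hpos : 0 < |(t ^ N)⁻¹| := abs_pos.2 (inv_ne_zero (pow_ne_zero _ ht))
  calc _ ≤ t ^ 2 * (1 + η * N / ν) * (|(t ^ N)⁻¹| * ∫ x, qf (a x) (fun i => pd u i x)) /
      (|(t ^ N)⁻¹| * ∫ x, u x ^ 2) := by
        refine div_le_div_of_nonneg_right hnum ?_
        exact mul_nonneg hpos.le (integral_nonneg fun x => sq_nonneg _)
    _ = _ := by
        rw [← mul_div_assoc, mul_left_comm, mul_div_mul_left _ _ hpos.ne']

lemma lamk_dil {N : ℕ} (hN : 1 ≤ N) {a : EuclideanSpace ℝ (Fin N) → Matrix (Fin N) (Fin N) ℝ}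
    {D : Set (EuclideanSpace ℝ (Fin N))} (hD : IsCompact D)
    (ha_cont : ∀ i j, ContinuousOn (fun x => a x i j) D)
    {ν : ℝ} (hν : 0 < ν)
    (ha_pos : ∀ x ∈ D, ∀ ξ : Fin N → ℝ, ν * ∑ i, ξ i ^ 2 ≤ qf (a x) ξ)
    {A B : Set (EuclideanSpace ℝ (Fin N))} (hA : A ⊆ D) (hAo : IsOpen A) (hAne : A.Nonempty) (hB : B ⊆ D)
    (x0 : EuclideanSpace ℝ (Fin N)) (t : ℝ) (ht : t ≠ 0)
    (hAB : ∀ x, x0 + t • (x - x0) ∈ A → x ∈ B) {η : ℝ} (hη : 0 ≤ η)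
    (hclose : ∀ x ∈ B, x0 + t • (x - x0) ∈ A → ∀ i j, |a x i j - a (x0 + t • (x - x0)) i j| ≤ η)
    {k : ℕ} (hk : 1 ≤ k) :
    lamk a B k ≤ t ^ 2 * (1 + η * N / ν) * lamk a A k := by
  have hκ : 0 < t ^ 2 * (1 + η * N / ν) := by positivity
  rw [mul_comm, ← div_le_iff₀ hκ, lamk_eq a A]
  refine le_csInf ?_ ?_
  · obtain ⟨V, h1, h2⟩ := exists_testspace hN hAo hAne k
    exact ⟨_, V, h1, h2, rfl⟩
  rintro μ ⟨V, hVk, hV, rfl⟩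
  haveI : FiniteDimensional ℝ V := Module.finite_of_finrank_pos (by omega)
  rw [div_le_iff₀ hκ]
  let Φ := LinearMap.funLeft ℝ ℝ (dil x0 t ht)
  have hΦ : Function.Injective Φ := LinearMap.funLeft_injective_of_surjective ℝ ℝ _ (dil x0 t ht).surjective
  have key := fun u hu => rq_dil ha_cont hν ha_pos hA hB x0 t ht hAB hη hclose (hV u hu)
  have hle : lamk a B k ≤ sSup (rset a B (V.map Φ)) := by
    rw [lamk_eq]
    refine csInf_le ⟨0, ?_⟩ ⟨V.map Φ, ?_, ?_, rfl⟩
    · rintro μ ⟨W, _, hW, rfl⟩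
      refine Real.sSup_nonneg ?_
      rintro q ⟨u, hu, _, rfl⟩
      exact rq_nonneg hν ha_pos hB (hW u hu)
    · rw [← hVk]
      exact ((Submodule.equivMapOfInjective Φ hΦ V).finrank_eq).symm
    · rintro _ ⟨u, hu, rfl⟩
      exact (key u hu).1
  refine hle.trans (Real.sSup_le ?_ ?_)
  · rintro q ⟨_, ⟨u, hu, rfl⟩, hu0, rfl⟩
    refine (key u hu).2.trans ?_
    rw [mul_comm]
    refine mul_le_mul_of_nonneg_right ?_ hκ.le
    refine le_csSup (bdd_rset hD ha_cont hA V hV) ⟨u, hu, ?_, rfl⟩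
    rintro rfl
    exact hu0 (map_zero Φ)
  · refine mul_nonneg (Real.sSup_nonneg ?_) hκ.le
    rintro q ⟨u, hu, _, rfl⟩
    exact rq_nonneg hν ha_pos hA (hV u hu)

lemma lamk_lower {N : ℕ} (hN : 1 ≤ N) {a : EuclideanSpace ℝ (Fin N) → Matrix (Fin N) (Fin N) ℝ}
    {D : Set (EuclideanSpace ℝ (Fin N))} (hD : IsCompact D)
    (ha_cont : ∀ i j, ContinuousOn (fun x => a x i j) D)
    {ν : ℝ} (hν : 0 < ν)
    (ha_pos : ∀ x ∈ D, ∀ ξ : Fin N → ℝ, ν * ∑ i, ξ i ^ 2 ≤ qf (a x) ξ)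
    {R : ℝ} (hR : 0 < R) (hDR : D ⊆ closedBall 0 R)
    {A : Set (EuclideanSpace ℝ (Fin N))} (hA : A ⊆ D) (hAo : IsOpen A) (hAne : A.Nonempty)
    {k : ℕ} (hk : 1 ≤ k) : ν / (4 * R ^ 2) ≤ lamk a A k := by
  rw [lamk_eq]
  refine le_csInf ?_ ?_
  · obtain ⟨V, h1, h2⟩ := exists_testspace hN hAo hAne k
    exact ⟨_, V, h1, h2, rfl⟩
  rintro μ ⟨V, hVk, hV, rfl⟩
  haveI : FiniteDimensional ℝ V := Module.finite_of_finrank_pos (by omega)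
  haveI : Nontrivial V := Module.nontrivial_of_finrank_pos (R := ℝ) (by omega)
  obtain ⟨⟨u, hu⟩, hu0⟩ := exists_ne (0 : V)
  have hu0' : u ≠ 0 := fun h => hu0 (Subtype.ext h)
  exact (rq_lower hN ha_cont hν ha_pos hR hDR hA (hV u hu) hu0').trans
    (le_csSup (bdd_rset hD ha_cont hA V hV) ⟨u, hu, hu0', rfl⟩)

lemma lamk_close {N : ℕ} (hN : 1 ≤ N) {a : EuclideanSpace ℝ (Fin N) → Matrix (Fin N) (Fin N) ℝ}
    {D : Set (EuclideanSpace ℝ (Fin N))} (hD : IsCompact D)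
    (ha_cont : ∀ i j, ContinuousOn (fun x => a x i j) D)
    {ν : ℝ} (hν : 0 < ν)
    (ha_pos : ∀ x ∈ D, ∀ ξ : Fin N → ℝ, ν * ∑ i, ξ i ^ 2 ≤ qf (a x) ξ)
    {R : ℝ} (hR : 0 < R) (hDR : D ⊆ closedBall 0 R)
    {k : ℕ} (hk : 1 ≤ k) {κ : ℝ} (hκ : 1 < κ) :
    ∃ δ > 0, ∀ A B : Set (EuclideanSpace ℝ (Fin N)), A ⊆ D → IsOpen A → A.Nonempty → B ⊆ D →
      Convex ℝ B → ∀ x0, ∀ r > 0, ball x0 r ⊆ B → A ⊆ thickening (δ * r) B →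
      0 ≤ lamk a A k → lamk a B k ≤ κ * lamk a A k := by
  set s := min 1 ((κ - 1) / 7) with hs
  have hs0 : 0 < s := lt_min one_pos (by linarith)
  have hs1 : s ≤ 1 := min_le_left _ _
  have hs2 : s ≤ (κ - 1) / 7 := min_le_right _ _
  have hNpos : (0 : ℝ) < N := by exact_mod_cast hN
  have huc : UniformContinuousOn (fun x => (fun i j => a x i j : Fin N → Fin N → ℝ)) D :=
    hD.uniformContinuousOn_of_continuous
      (continuousOn_pi.2 fun i => continuousOn_pi.2 fun j => ha_cont i j)
  have hη0 : 0 < s * ν / N := by positivity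
  obtain ⟨δ0, hδ0, huc⟩ := Metric.uniformContinuousOn_iff.1 huc _ hη0
  set δ := min s (δ0 / (2 * R + 1)) with hδ
  have hδpos : 0 < δ := lt_min hs0 (by positivity)
  have hδs : δ ≤ s := min_le_left _ _
  have hδ2 : δ * (2 * R) < δ0 := by
    have : δ ≤ δ0 / (2 * R + 1) := min_le_right _ _
    rw [le_div_iff₀ (by positivity)] at this
    linarith
  refine ⟨δ, hδpos, fun A B hA hAo hAne hB hBc x0 r hr hball hAB hlam => ?_⟩
  have hAB' : ∀ x, x0 + (1 + δ) • (x - x0) ∈ A → x ∈ B := by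
    intro x hx
    refine dilate_mem hBc hr (mul_pos hδpos hr) hball hAB ?_
    rwa [mul_div_assoc, div_self hr.ne', mul_one]
  have hmain := lamk_dil hN hD ha_cont hν ha_pos hA hAo hAne hB x0 (1 + δ) (by positivity) hAB'
    hη0.le (by
      intro x hx hxA i j
      have hd : dist x (x0 + (1 + δ) • (x - x0)) < δ0 := by
        rw [dist_eq_norm]
        have e : x - (x0 + (1 + δ) • (x - x0)) = (-δ) • (x - x0) := by module
        rw [e, norm_smul, norm_neg, Real.norm_of_nonneg hδpos.le]
        have h1 := mem_closedBall_zero_iff.1 (hDR (hB hx))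
        have h2 := mem_closedBall_zero_iff.1 (hDR (hB (hball (mem_ball_self hr))))
        have h3 := norm_sub_le x x0
        calc δ * ‖x - x0‖ ≤ δ * (2 * R) := by gcongr; linarith
          _ < δ0 := hδ2
      have h := (huc x (hB hx) _ (hA hxA) hd).le
      have h1 := (dist_le_pi_dist _ _ i).trans h
      have h2 := (dist_le_pi_dist _ _ j).trans h1
      rwa [Real.dist_eq] at h2) hk
  refine hmain.trans (mul_le_mul_of_nonneg_right ?_ hlam)
  have e : s * ν / N * N / ν = s := by field_simp
  rw [e]
  calc (1 + δ) ^ 2 * (1 + s) ≤ (1 + s) ^ 2 * (1 + s) := by gcongr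
    _ ≤ κ := by nlinarith [mul_nonneg hs0.le hs0.le, mul_nonneg (mul_nonneg hs0.le hs0.le) (sub_nonneg.2 hs1), mul_nonneg hs0.le (sub_nonneg.2 hs1)]

/-- The `k`-th Dirichlet eigenvalue of a second-order elliptic operator with continuous
non-constant coefficients is bounded and continuous on `C_m(D)` for the uniform
convergence. -/
theorem eigenvalue_bounded_continuous_var_coeff {N : ℕ} (hN : 2 ≤ N)
    (D : Set (EuclideanSpace ℝ (Fin N))) (hD : IsCompact D)
    (m : ℝ) (hm : 0 < m) (hne : ∃ Ω, InCm D m Ω)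
    (a : EuclideanSpace ℝ (Fin N) → Matrix (Fin N) (Fin N) ℝ)
    (ha_cont : ∀ i j, ContinuousOn (fun x => a x i j) D)
    (ha_symm : ∀ x ∈ D, ∀ i j, a x i j = a x j i)
    (ha_pos : ∃ ν : ℝ, 0 < ν ∧ ∀ x ∈ D, ∀ ξ : Fin N → ℝ,
      ν * ∑ i, ξ i ^ 2 ≤ ∑ i, ∑ j, a x i j * ξ i * ξ j)
    (k : ℕ) (hk : 1 ≤ k) :
    (∃ c C : ℝ, 0 < c ∧ c ≤ C ∧ ∀ Ω, InCm D m Ω → c ≤ lamk a Ω k ∧ lamk a Ω k ≤ C) ∧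
    (∀ (Ωn : ℕ → Set (EuclideanSpace ℝ (Fin N))) (L : Set (EuclideanSpace ℝ (Fin N))),
      (∀ n, InCm D m (Ωn n)) → InCm D m L → UnifConvTo Ωn L →
      Filter.Tendsto (fun n => lamk a (Ωn n) k) Filter.atTop (nhds (lamk a L k))) := by
  obtain ⟨ν, hν, ha_pos⟩ := ha_pos
  have ha_pos : ∀ x ∈ D, ∀ ξ : Fin N → ℝ, ν * ∑ i, ξ i ^ 2 ≤ qf (a x) ξ := ha_pos
  have hN1 : 1 ≤ N := by omega
  obtain ⟨R, hR, hDR⟩ : ∃ R : ℝ, 0 < R ∧ D ⊆ closedBall 0 R := by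
    obtain ⟨R, hR⟩ := hD.isBounded.subset_closedBall 0
    exact ⟨max R 1, by positivity, hR.trans (closedBall_subset_closedBall (le_max_left _ _))⟩
  have hnonempty : ∀ Ω, InCm D m Ω → Ω.Nonempty := by
    intro Ω hΩ
    by_contra h
    rw [Set.not_nonempty_iff_eq_empty] at h
    have := hΩ.2.2.2
    rw [h, measure_empty] at this
    have h2 := ENNReal.ofReal_pos.2 hm
    rw [← this] at h2
    exact lt_irrefl _ h2
  set c := ν / (4 * R ^ 2) with hc
  have hc0 : 0 < c := by positivity
  have hlow : ∀ Ω, InCm D m Ω → c ≤ lamk a Ω k := fun Ω hΩ =>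
    lamk_lower hN1 hD ha_cont hν ha_pos hR hDR hΩ.1 hΩ.2.1 (hnonempty Ω hΩ) hk
  constructor
  · have hup : ∃ C : ℝ, ∀ Ω, InCm D m Ω → lamk a Ω k ≤ C := by
      by_contra! hcon
      choose Ω hΩ hbig using fun n : ℕ => hcon n
      obtain ⟨x0, r, hr, hrD, hfreq⟩ := exists_common_ball D hD m hm Ω hΩ
      obtain ⟨n0, hn0⟩ := exists_nat_ge (lamk a (ball x0 r) k)
      obtain ⟨n, hn, hnn⟩ := (hfreq.and_eventually (eventually_ge_atTop n0)).exists
      have hle := lamk_dil hN1 hD ha_cont hν ha_pos hrD isOpen_ball (nonempty_ball.2 hr) (hΩ n).1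
        x0 1 one_ne_zero (by
          intro x hx
          rw [one_smul, add_sub_cancel] at hx
          exact hn hx) le_rfl (by
          intro x _ _ i j
          rw [one_smul, add_sub_cancel, sub_self, abs_zero]) hk
      have h1 : (n0 : ℝ) ≤ n := by exact_mod_cast hnn
      have h2 := hbig n
      simp only [one_pow, zero_mul, zero_div, add_zero, one_mul] at hle
      linarith
    obtain ⟨C, hC⟩ := hup
    exact ⟨c, max c C, hc0, le_max_left _ _, fun Ω hΩ => ⟨hlow Ω hΩ, (hC Ω hΩ).trans (le_max_right _ _)⟩⟩
  · intro Ωn L hΩn hL hconv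
    obtain ⟨x0, hx0⟩ := hnonempty L hL
    obtain ⟨ρ, hρ, hball⟩ := Metric.isOpen_iff.1 hL.2.1 x0 hx0
    set r := ρ / 2 with hr
    have hr0 : 0 < r := half_pos hρ
    have hball2 : ball x0 (2 * r) ⊆ L := by
      rw [hr, mul_div_cancel₀ _ two_ne_zero]; exact hball
    have hballr : ball x0 r ⊆ L := (ball_subset_ball (by linarith)).trans hball2
    have hlamL := hlow L hL
    set l := lamk a L k with hl
    have hl0 : 0 < l := hc0.trans_le hlamL
    rw [Metric.tendsto_atTop']
    intro σ hσ
    set s := σ / (2 * l) with hs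
    have hs0 : 0 < s := by positivity
    obtain ⟨δ, hδ, hcl⟩ := lamk_close hN1 hD ha_cont hν ha_pos hR hDR hk
      (show (1 : ℝ) < 1 + s by linarith)
    have hev : ∀ᶠ n in atTop, dist (lamk a (Ωn n) k) l < σ := by
      filter_upwards [hconv r hr0, hconv (δ * r) (mul_pos hδ hr0)] with n h1 h2
      have hn := hΩn n
      have hlamn := hlow _ hn
      have hb : ball x0 r ⊆ Ωn n :=
        ball_subset_of_thickening hn.2.1 hn.2.2.1 hr0 (hball2.trans h1.2)
      have u1 := hcl L (Ωn n) hL.1 hL.2.1 (hnonempty _ hL) hn.1 hn.2.2.1 x0 r hr0 hb h2.2 hl0.le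
      have u2 := hcl (Ωn n) L hn.1 hn.2.1 (hnonempty _ hn) hL.1 hL.2.2.1 x0 r hr0 hballr h2.1
        (hc0.le.trans hlamn)
      have hsl : s * l = σ / 2 := by rw [hs]; field_simp
      rw [← hl] at u1 u2
      rw [Real.dist_eq, abs_lt]
      constructor
      · by_contra! hcon
        have h3 : lamk a (Ωn n) k ≤ l := by linarith
        have h4 : s * lamk a (Ωn n) k ≤ s * l := by gcongr
        linarith
      · linarith
    obtain ⟨n0, hn0⟩ := eventually_atTop.1 hev
    exact ⟨n0, fun n hn => hn0 n hn.le⟩
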